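/- Let B ⊂ A be a regular inclusion of simple unital C*-algebras with a finite-index conditional expectation, and let E₀ : A → B be the minimal conditional expectation. Then the Watatani index of the inclusion satisfies [A:B]₀ = |W(B ⊂ A)| · dim_ℂ(C_A(B)): for every right quasi-basis (λ_i) of E₀ one has Σ_i λ_i λ_i* = (|W(B ⊂ A)| · dim_ℂ C_A(B))·1. In particular [A:B]₀ is a positive integer and |W(B ⊂ A)| ≤ [A:B]₀; and if moreover the inclusion is irreducible (C_A(B) = ℂ·1), then [A:B]₀ = |N_A(B)/U(B)|. -/

import Mathlib

/-!
Let `F` be any conditional expectation of finite index onto `B`, with `B` of trivial center, and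
let `C = C_A(B)`. Then `F` maps `C` to the scalars, and an element of `B` intertwining `b` with
`g b g*` is a multiple of a unitary, so `F (c g c') = 0` for `c, c' ∈ C` and a normalizing unitary
`g ∉ U(B) U(C)`. Bessel's inequality bounds the length of `F`-orthonormal families: the Weyl group
is finite, with representatives `u_w`, and `F` restricts to a faithful state on the
finite-dimensional algebra `C`. If `c_j` is an orthonormal basis of `C` for this state, the products
`u_w c_j` are orthonormal, and by regularity they form a quasi-basis of `F`. Hence `F` has index
`∑_w u_w (∑_j c_j c_j*) u_w*`.

Let `n = |W|`, `d = dim C` and let `τ` be the normalized trace of the left regular representation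
of `C`. Averaging `F` over the `c_j` gives a conditional expectation that restricts to `τ` on `C`.
Traciality makes `∑_k t_k t_k* = d` for every `τ`-orthonormal basis `t_k`, so this expectation has
index `n d`. Conversely, `τ` is invariant under the conjugations by `u_w`, so the index `r` of `F`
satisfies `r = n ∑_j τ (c_j c_j*)`. Comparing the mutually inverse transition matrices between
`c_j` and `t_k` through `2 |ab| ≤ |a|² + |b|²` yields `∑_j τ (c_j c_j*) ≥ d`, hence `r ≥ n d`.
-/

namespace RegularInclusion

variable {A : Type*} [NormedRing A] [StarRing A] [CStarRing A] [CompleteSpace A]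
  [NormedAlgebra ℂ A] [StarModule ℂ A]

/-- A conditional expectation of `A` onto the subset `B`: a `ℂ`-linear positive
`B`-bimodular projection of `A` onto `B`. -/
def IsCondExp (B : Set A) (E : A →ₗ[ℂ] A) : Prop :=
  (∀ x, E x ∈ B) ∧ (∀ b ∈ B, E b = b) ∧
  (∀ x, ∃ y, E (star x * x) = star y * y) ∧
  (∀ b₁ ∈ B, ∀ b₂ ∈ B, ∀ x, E (b₁ * x * b₂) = b₁ * E x * b₂)

/-- `l` is a right quasi-basis for `E`, witnessing finite index. -/
def IsRightQB (E : A →ₗ[ℂ] A) {n : ℕ} (l : Fin n → A) : Prop :=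
  ∀ x, x = ∑ i, E (x * l i) * star (l i)

/-- The centralizer (relative commutant) `C_A(B)` of `B` in `A`. -/
def cent (B : Set A) : Set A := {x | ∀ b ∈ B, x * b = b * x}

/-- The normalizer `N_A(B) = {u ∈ U(A) : uBu* = B}` of `B` in `A`. -/
def normalizer (B : Set A) : Set A :=
  {u | u ∈ unitary A ∧ (fun x => u * x * star u) '' B = B}

/-- The set `U(B)` of unitaries of `B`. -/
def UB (B : Set A) : Set A := {b | b ∈ B ∧ b ∈ unitary A}

/-- The set `U(B)·U(C_A(B))` of products of a unitary of `B` and a unitary of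
the centralizer of `B`. -/
def UBC (B : Set A) : Set A :=
  {x | ∃ b c, b ∈ B ∧ b ∈ unitary A ∧ c ∈ cent B ∧ c ∈ unitary A ∧ x = b * c}

/-- Simplicity of the C*-algebra (given as the subset `S` of `A`): the only closed
two-sided ideals of `S` are `{0}` and `S`. -/
def IsSimpleCStar (S : Set A) : Prop :=
  ∀ I : Set A, I ⊆ S → IsClosed I → (0 : A) ∈ I →
    (∀ x ∈ I, ∀ y ∈ I, x + y ∈ I) →
    (∀ x ∈ I, ∀ b ∈ S, x * b ∈ I ∧ b * x ∈ I) →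
    I = {0} ∨ I = S

/-- The intermediate C*-subalgebra `C := C*(B ∪ C_A(B))` generated by `B` and the
centralizer of `B`. -/
def genC (B : Set A) : StarSubalgebra ℂ A :=
  (StarAlgebra.adjoin ℂ (B ∪ cent B)).topologicalClosure

/-- Regularity of the inclusion `B ⊆ A`: the normalizer of `B` generates `A` as a
C*-algebra. -/
def IsRegular (B : Set A) : Prop :=
  (StarAlgebra.adjoin ℂ (normalizer B)).topologicalClosure = ⊤

/-- `E₀` is the minimal conditional expectation of `A` onto `B`: the finite-index
conditional expectation whose (scalar) Watatani index is least among all finite-index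
conditional expectations onto `B`. -/
def IsMinimalCondExp (B : Set A) (E₀ : A →ₗ[ℂ] A) : Prop :=
  IsCondExp B E₀ ∧
  ∃ (r₀ : ℝ) (n : ℕ) (l : Fin n → A), IsRightQB E₀ l ∧
    (∑ i, l i * star (l i)) = (r₀ : ℂ) • 1 ∧
    ∀ E : A →ₗ[ℂ] A, IsCondExp B E → ∀ (m : ℕ) (μ : Fin m → A), IsRightQB E μ →
      ∀ r : ℝ, (∑ i, μ i * star (μ i)) = (r : ℂ) • 1 → r₀ ≤ r

/-- The centralizer of `B` in `A`, as a `ℂ`-submodule of `A`. -/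
def centSubmodule (B : Set A) : Submodule ℂ A where
  carrier := cent B
  zero_mem' := by intro b _; simp
  add_mem' := by
    intro x y hx hy b hb
    rw [add_mul, mul_add, hx b hb, hy b hb]
  smul_mem' := by
    intro c x hx b hb
    rw [smul_mul_assoc, mul_smul_comm, hx b hb]

open Module
open scoped ComplexOrder ComplexConjugate

/-- The subset `B` of an algebra has trivial center: the only elements of `B` that commute with
all of `B` are the scalars. -/
def HasTrivialCenter (B : Set A) : Prop :=
  ∀ z ∈ B, z ∈ cent B → ∃ c : ℂ, z = c • (1 : A)

section LinearAlgebra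

variable {𝕜 V ι κ : Type*} [RCLike 𝕜] [Fintype ι] [Fintype κ]

theorem two_mul_card_le_sum_norm_repr_sq_add [AddCommGroup V] [Module 𝕜 V]
    (b : Basis ι 𝕜 V) (b' : Basis κ 𝕜 V) :
    2 * (Fintype.card ι : ℝ) ≤
      ∑ i, ∑ k, ‖b'.repr (b i) k‖ ^ 2 + ∑ k, ∑ i, ‖b.repr (b' k) i‖ ^ 2 := by
  -- The two transition matrices are inverse to each other; compare diagonal entries.
  have one_eq (i : ι) : (1 : 𝕜) = ∑ k, b'.repr (b i) k * b.repr (b' k) i := by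
    calc (1 : 𝕜) = b.repr (∑ k, b'.repr (b i) k • b' k) i := by simp [b'.sum_repr]
      _ = _ := by simp only [map_sum, map_smul, Finsupp.finsetSum_apply, Finsupp.smul_apply,
        smul_eq_mul]
  have two_le (i : ι) : 2 ≤ ∑ k, (‖b'.repr (b i) k‖ ^ 2 + ‖b.repr (b' k) i‖ ^ 2) := by
    calc (2 : ℝ) = 2 * ‖∑ k, b'.repr (b i) k * b.repr (b' k) i‖ := by simp [← one_eq i]
      _ ≤ 2 * ∑ k, ‖b'.repr (b i) k‖ * ‖b.repr (b' k) i‖ := by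
          gcongr
          exact (norm_sum_le _ _).trans_eq (by simp)
      _ ≤ _ := by
          rw [Finset.mul_sum]
          gcongr with k
          rw [← mul_assoc]
          exact two_mul_le_add_sq _ _
  calc 2 * (Fintype.card ι : ℝ) = ∑ _i : ι, (2 : ℝ) := by simp [mul_comm]
    _ ≤ ∑ i, ∑ k, (‖b'.repr (b i) k‖ ^ 2 + ‖b.repr (b' k) i‖ ^ 2) :=
        Finset.sum_le_sum fun i _ ↦ two_le i
    _ = _ := by
        simp only [Finset.sum_add_distrib]
        rw [Finset.sum_comm (f := fun i k ↦ ‖b.repr (b' k) i‖ ^ 2)]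

theorem finiteDimensional_of_orthonormal_card_le [NormedAddCommGroup V] [InnerProductSpace 𝕜 V]
    {N : ℕ} (hN : ∀ (n : ℕ) (v : Fin n → V), Orthonormal 𝕜 v → n ≤ N) :
    FiniteDimensional 𝕜 V := by
  have rank_le : Module.rank 𝕜 V ≤ N := by
    refine _root_.rank_le fun s hs ↦ ?_
    let v : Fin s.card → V := fun i ↦ s.equivFin.symm i
    have hv : LinearIndependent 𝕜 v := hs.comp _ s.equivFin.symm.injective
    exact hN _ _ (InnerProductSpace.gramSchmidtNormed_orthonormal hv)
  exact Module.rank_lt_aleph0_iff.mp (rank_le.trans_lt (Cardinal.natCast_lt_aleph0))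

end LinearAlgebra

theorem exists_fin_transversal {α : Type*} (s : Setoid α) {N : ℕ}
    (hN : ∀ (n : ℕ) (f : Fin n → α), Pairwise (fun i j ↦ ¬ s (f i) (f j)) → n ≤ N) :
    ∃ (n : ℕ) (f : Fin n → α), Pairwise (fun i j ↦ ¬ s (f i) (f j)) ∧ ∀ a, ∃ i, s (f i) a := by
  have out_inequiv {n : ℕ} {q : Fin n → Quotient s} (hq : Function.Injective q) :
      Pairwise fun i j ↦ ¬ s (q i).out (q j).out :=
    fun i j hij h ↦ hij (hq (Quotient.out_equiv_out.mp h))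
  have : Finite (Quotient s) := by
    by_contra hinf
    rw [not_finite_iff_infinite] at hinf
    let q : Fin (N + 1) ↪ Quotient s := Fin.valEmbedding.trans (Infinite.natEmbedding _)
    exact (hN (N + 1) _ (out_inequiv q.injective)).not_gt N.lt_succ_self
  obtain ⟨n, ⟨e⟩⟩ := Finite.exists_equiv_fin (Quotient s)
  refine ⟨n, fun i ↦ (e.symm i).out, out_inequiv e.symm.injective, fun a ↦ ⟨e ⟦a⟧, ?_⟩⟩
  simpa using Quotient.mk_out a

/-- Orthonormality `F (xᵢ* xⱼ) = δᵢⱼ` of a family with respect to a map `F`, which may be a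
conditional expectation or a scalar functional. -/
def IsOrthonormal {R S ι : Type*} [Mul R] [Star R] [Zero S] [One S] [DecidableEq ι]
    (F : R → S) (x : ι → R) : Prop :=
  ∀ i j, F (star (x i) * x j) = if i = j then 1 else 0

section NormalizedTrace

variable {C : Type*} [Ring C] [Algebra ℂ C]

variable (C) in
/-- The trace of the left regular representation of a finite-dimensional algebra, normalized to
take the value `1` at `1`. Mathlib's `Algebra.trace` is restricted to commutative algebras. -/
noncomputable def normalizedTrace : C →ₗ[ℂ] ℂ :=
  (finrank ℂ C : ℂ)⁻¹ • LinearMap.trace ℂ C ∘ₗ (Algebra.lmul ℂ C).toLinearMap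

theorem normalizedTrace_apply (x : C) :
    normalizedTrace C x = (finrank ℂ C : ℂ)⁻¹ * LinearMap.trace ℂ C (LinearMap.mulLeft ℂ x) :=
  rfl

theorem normalizedTrace_mul_comm (x y : C) :
    normalizedTrace C (x * y) = normalizedTrace C (y * x) := by
  simp only [normalizedTrace_apply, LinearMap.mulLeft_mul, ← Module.End.mul_eq_comp,
    LinearMap.trace_mul_comm]

theorem normalizedTrace_algEquiv (e : C ≃ₐ[ℂ] C) (x : C) :
    normalizedTrace C (e x) = normalizedTrace C x := by
  have mulLeft_eq : LinearMap.mulLeft ℂ (e x) = e.toLinearEquiv.conj (LinearMap.mulLeft ℂ x) := by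
    ext y
    simp [LinearEquiv.conj_apply]
  rw [normalizedTrace_apply, normalizedTrace_apply, mulLeft_eq, LinearMap.trace_conj']

end NormalizedTrace

section FaithfulState

variable {C ι : Type*} [Ring C] [StarRing C] [Algebra ℂ C] {φ : C →ₗ[ℂ] ℂ}

/-- A faithful state on a complex `*`-algebra. No topology is assumed, so Hermitian symmetry is
required separately from positivity. -/
structure IsFaithfulState (φ : C →ₗ[ℂ] ℂ) : Prop where
  map_one : φ 1 = 1
  map_star : ∀ x, φ (star x) = conj (φ x)
  nonneg : ∀ x, 0 ≤ φ (star x * x)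
  eq_zero : ∀ x, φ (star x * x) = 0 → x = 0

theorem IsFaithfulState.nontrivial (hφ : IsFaithfulState φ) : Nontrivial C :=
  nontrivial_of_ne 1 0 fun h ↦ by simpa [h] using hφ.map_one

section OrthonormalBasis

variable [DecidableEq ι] {b t : Basis ι ℂ C}

theorem IsOrthonormal.repr_apply [Finite ι] (hb : IsOrthonormal φ b) (x : C) (i : ι) :
    b.repr x i = φ (star (b i) * x) := by
  have := Fintype.ofFinite ι
  symm
  calc φ (star (b i) * x) = φ (star (b i) * ∑ j, b.repr x j • b j) := by rw [b.sum_repr]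
    _ = b.repr x i := by
        simp only [Finset.mul_sum, mul_smul_comm, map_sum, map_smul, hb i, smul_eq_mul, mul_ite,
          mul_one, mul_zero, Finset.sum_ite_eq, Finset.mem_univ, if_true]

variable [Fintype ι]

theorem IsOrthonormal.sum_smul_eq (hb : IsOrthonormal φ b) (x : C) :
    ∑ i, φ (star (b i) * x) • b i = x := by
  simp only [← hb.repr_apply, b.sum_repr]

theorem IsOrthonormal.sum_norm_repr_sq [StarModule ℂ C] (hb : IsOrthonormal φ b) (x : C) :
    ((∑ i, ‖b.repr x i‖ ^ 2 : ℝ) : ℂ) = φ (star x * x) := by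
  symm
  calc φ (star x * x) = φ (star (∑ i, b.repr x i • b i) * x) := by rw [b.sum_repr]
    _ = ∑ i, conj (b.repr x i) * φ (star (b i) * x) := by
        simp only [star_sum, star_smul, Finset.sum_mul, smul_mul_assoc, map_sum, map_smul,
          smul_eq_mul, starRingEnd_apply]
    _ = _ := by simp [← hb.repr_apply, Complex.conj_mul']

theorem IsOrthonormal.trace_eq_sum (hb : IsOrthonormal φ b) (f : C →ₗ[ℂ] C) :
    LinearMap.trace ℂ C f = ∑ i, φ (star (b i) * f (b i)) := by
  rw [LinearMap.trace_eq_matrix_trace ℂ b]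
  simp [Matrix.trace, LinearMap.toMatrix_apply, hb.repr_apply]

theorem IsOrthonormal.normalizedTrace_eq (hb : IsOrthonormal φ b) (x : C) :
    normalizedTrace C x = (Fintype.card ι : ℂ)⁻¹ * ∑ i, φ (star (b i) * x * b i) := by
  simp [normalizedTrace_apply, hb.trace_eq_sum, finrank_eq_card_basis b, mul_assoc]

theorem IsOrthonormal.sum_mul_star_eq (ht : IsOrthonormal (normalizedTrace C) t)
    (hτ : IsFaithfulState (normalizedTrace C)) :
    ∑ k, t k * star (t k) = (Fintype.card ι : ℂ) • (1 : C) := by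
  have := hτ.nontrivial
  have := t.index_nonempty
  have trace_mul (x : C) : normalizedTrace C (x * ∑ k, t k * star (t k)) =
      normalizedTrace C (x * ((Fintype.card ι : ℂ) • 1)) := by
    have h := ht.normalizedTrace_eq x
    rw [eq_inv_mul_iff_mul_eq₀ (by simp)] at h
    calc normalizedTrace C (x * ∑ k, t k * star (t k))
        = ∑ k, normalizedTrace C (star (t k) * x * t k) := by
          simp only [Finset.mul_sum, map_sum]
          refine Finset.sum_congr rfl fun k _ ↦ ?_
          rw [← mul_assoc, normalizedTrace_mul_comm, mul_assoc]
      _ = _ := by simp [← h]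
  refine sub_eq_zero.mp (hτ.eq_zero _ ?_)
  rw [mul_sub, map_sub, trace_mul, sub_self]

theorem IsOrthonormal.sum_star_mul_eq (ht : IsOrthonormal (normalizedTrace C) t)
    (hτ : IsFaithfulState (normalizedTrace C)) :
    ∑ k, star (t k) * t k = (Fintype.card ι : ℂ) • (1 : C) := by
  rw [← ht.sum_mul_star_eq hτ]
  calc ∑ m, star (t m) * t m
      = ∑ m, (∑ k, normalizedTrace C (star (t k) * star (t m)) • t k) * t m := by
        simp only [ht.sum_smul_eq]
    _ = ∑ k, t k * ∑ m, normalizedTrace C (star (t m) * star (t k)) • t m := by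
        simp only [Finset.sum_mul, Finset.mul_sum, smul_mul_assoc, mul_smul_comm]
        rw [Finset.sum_comm]
        simp only [normalizedTrace_mul_comm]
    _ = ∑ k, t k * star (t k) := by simp only [ht.sum_smul_eq]

end OrthonormalBasis

namespace IsFaithfulState

variable [StarModule ℂ C]

/-- The inner product `⟪x, y⟫ = φ (x* y)` of the GNS construction. -/
noncomputable abbrev innerCore (hφ : IsFaithfulState φ) : InnerProductSpace.Core ℂ C where
  inner x y := φ (star x * y)
  conj_inner_symm x y := by rw [← hφ.map_star]; simp
  re_inner_nonneg x := (Complex.le_def.mp (hφ.nonneg x)).1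
  add_left x y z := by simp [add_mul]
  smul_left x y r := by simp
  definite := hφ.eq_zero

theorem finiteDimensional (hφ : IsFaithfulState φ) {N : ℕ}
    (hN : ∀ (n : ℕ) (c : Fin n → C), IsOrthonormal φ c → n ≤ N) : FiniteDimensional ℂ C := by
  let _ := hφ.innerCore.toNormedAddCommGroup
  let _ := InnerProductSpace.ofCore hφ.innerCore.toCore
  exact finiteDimensional_of_orthonormal_card_le fun n c hc ↦
    hN n c (orthonormal_iff_ite.mp hc)

theorem exists_orthonormal_basis [FiniteDimensional ℂ C] (hφ : IsFaithfulState φ) :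
    ∃ b : Basis (Fin (finrank ℂ C)) ℂ C, IsOrthonormal φ b := by
  let _ := hφ.innerCore.toNormedAddCommGroup
  let _ := InnerProductSpace.ofCore hφ.innerCore.toCore
  refine ⟨(stdOrthonormalBasis ℂ C).toBasis, fun i j ↦ ?_⟩
  rw [OrthonormalBasis.coe_toBasis]
  exact orthonormal_iff_ite.mp (stdOrthonormalBasis ℂ C).orthonormal i j

end IsFaithfulState

variable [StarModule ℂ C] [FiniteDimensional ℂ C]

theorem IsFaithfulState.isFaithfulState_normalizedTrace (hφ : IsFaithfulState φ) :
    IsFaithfulState (normalizedTrace C) := by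
  obtain ⟨b, hb⟩ := hφ.exists_orthonormal_basis
  have := hφ.nontrivial
  have card_pos : 0 < (Fintype.card (Fin (finrank ℂ C)) : ℂ)⁻¹ := by
    simpa using finrank_pos (R := ℂ) (M := C)
  have star_mul_eq (x : C) (i) : star (b i) * (star x * x) * b i = star (x * b i) * (x * b i) := by
    simp only [star_mul, mul_assoc]
  refine ⟨?_, fun x ↦ ?_, fun x ↦ ?_, fun x hx ↦ ?_⟩
  · simp [normalizedTrace_apply, LinearMap.mulLeft_one, finrank_pos.ne']
  · simp only [hb.normalizedTrace_eq, map_mul, map_inv₀, map_natCast, map_sum, ← hφ.map_star,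
      star_mul, star_star, mul_assoc]
  · simp only [hb.normalizedTrace_eq, star_mul_eq]
    exact mul_nonneg card_pos.le (Finset.sum_nonneg fun i _ ↦ hφ.nonneg _)
  · rw [hb.normalizedTrace_eq, mul_eq_zero, or_iff_right card_pos.ne'] at hx
    simp only [star_mul_eq] at hx
    rw [Finset.sum_eq_zero_iff_of_nonneg fun i _ ↦ hφ.nonneg _] at hx
    have mulLeft_eq : LinearMap.mulLeft ℂ x = 0 :=
      b.ext fun i ↦ hφ.eq_zero _ (hx i (Finset.mem_univ i))
    simpa using LinearMap.congr_fun mulLeft_eq 1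

theorem IsFaithfulState.finrank_le_normalizedTrace_sum_mul_star (hφ : IsFaithfulState φ)
    [Fintype ι] [DecidableEq ι] {c : Basis ι ℂ C} (hc : IsOrthonormal φ c) :
    (finrank ℂ C : ℂ) ≤ normalizedTrace C (∑ j, c j * star (c j)) := by
  have hτ := hφ.isFaithfulState_normalizedTrace
  obtain ⟨t, ht⟩ := hτ.exists_orthonormal_basis
  have sum_c : ((∑ j, ∑ k, ‖t.repr (c j) k‖ ^ 2 : ℝ) : ℂ) =
      normalizedTrace C (∑ j, c j * star (c j)) := by
    rw [Complex.ofReal_sum, map_sum]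
    exact Finset.sum_congr rfl fun j _ ↦
      (ht.sum_norm_repr_sq (c j)).trans (normalizedTrace_mul_comm _ _)
  have sum_t : ((∑ k, ∑ j, ‖c.repr (t k) j‖ ^ 2 : ℝ) : ℂ) = finrank ℂ C := by
    simp only [Complex.ofReal_sum _ (fun k ↦ ∑ j, ‖c.repr (t k) j‖ ^ 2), hc.sum_norm_repr_sq,
      ← map_sum, ht.sum_star_mul_eq hτ, Fintype.card_fin, map_smul, hφ.map_one, smul_eq_mul,
      mul_one]
  have h := two_mul_card_le_sum_norm_repr_sq_add c t
  rw [← finrank_eq_card_basis c, ← Complex.real_le_real] at h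
  push_cast at h sum_c sum_t
  rw [sum_c, sum_t, two_mul] at h
  exact le_of_add_le_add_right h

end FaithfulState

section Inclusion

variable {A : Type*} [CStarAlgebra A] {B : StarSubalgebra ℂ A} {g x y : A}

theorem mem_normalizer_iff :
    g ∈ normalizer (B : Set A) ↔
      g ∈ unitary A ∧ (∀ b ∈ B, g * b * star g ∈ B) ∧ ∀ b ∈ B, star g * b * g ∈ B := by
  refine and_congr_right fun hg ↦ ?_
  let e := (Unitary.conjStarAlgAut ℂ A ⟨g, hg⟩).toEquiv
  change e '' B = B ↔ (∀ b ∈ B, e b ∈ B) ∧ ∀ b ∈ B, e.symm b ∈ B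
  rw [Set.Subset.antisymm_iff, Set.image_subset_iff, e.image_eq_preimage_symm]
  rfl

theorem one_mem_normalizer : (1 : A) ∈ normalizer (B : Set A) := by
  simp [mem_normalizer_iff, one_mem]

theorem star_mem_normalizer (hg : g ∈ normalizer (B : Set A)) :
    star g ∈ normalizer (B : Set A) := by
  rw [mem_normalizer_iff] at hg ⊢
  simpa [Unitary.star_mem_iff, and_comm] using hg

theorem mul_mem_normalizer {h : A} (hg : g ∈ normalizer (B : Set A))
    (hh : h ∈ normalizer (B : Set A)) : g * h ∈ normalizer (B : Set A) := by
  rw [mem_normalizer_iff] at hg hh ⊢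
  refine ⟨mul_mem hg.1 hh.1, fun b hb ↦ ?_, fun b hb ↦ ?_⟩
  · simpa only [star_mul, mul_assoc] using hg.2.1 _ (hh.2.1 b hb)
  · simpa only [star_mul, mul_assoc] using hh.2.2 _ (hg.2.2 b hb)

/-- The relative commutant `C_A(B)`, as a `*`-subalgebra. -/
def relCommutant (B : StarSubalgebra ℂ A) : StarSubalgebra ℂ A :=
  StarSubalgebra.centralizer ℂ (B : Set A)

theorem mem_relCommutant_iff : x ∈ relCommutant B ↔ x ∈ cent (B : Set A) := by
  rw [relCommutant, StarSubalgebra.mem_centralizer_iff]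
  exact ⟨fun h b hb ↦ (h b hb).1.symm,
    fun h b hb ↦ ⟨(h b hb).symm, (h (star b) (star_mem (s := B) hb)).symm⟩⟩

theorem finrank_relCommutant :
    finrank ℂ (relCommutant B) = finrank ℂ (centSubmodule (B : Set A)) := by
  have : Subalgebra.toSubmodule (relCommutant B).toSubalgebra = centSubmodule (B : Set A) :=
    Submodule.ext fun _ ↦ mem_relCommutant_iff
  rw [← this]
  rfl

theorem conj_mem_relCommutant (hg : g ∈ normalizer (B : Set A)) (hx : x ∈ relCommutant B) :
    g * x * star g ∈ relCommutant B := by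
  rw [mem_relCommutant_iff] at hx ⊢
  obtain ⟨hgu, -, hconj'⟩ := mem_normalizer_iff.mp hg
  intro b hb
  calc g * x * star g * b = g * (x * (star g * b * g)) * star g := by
        simp [mul_assoc, Unitary.mul_star_self_of_mem hgu]
    _ = g * ((star g * b * g) * x) * star g := by rw [hx _ (hconj' b hb)]
    _ = b * (g * x * star g) := by
        simp [← mul_assoc, Unitary.mul_star_self_of_mem hgu]

/-- The automorphism of the relative commutant of `B` given by conjugation with a unitary that
normalizes `B`. -/
noncomputable def conjRelCommutant (hg : g ∈ normalizer (B : Set A)) :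
    relCommutant B ≃ₐ[ℂ] relCommutant B :=
  .ofAlgHom
    (((Unitary.conjStarAlgAut ℂ A ⟨g, hg.1⟩).toAlgEquiv.toAlgHom.comp
      (relCommutant B).toSubalgebra.val).codRestrict _ fun x ↦ conj_mem_relCommutant hg x.2)
    (((Unitary.conjStarAlgAut ℂ A ⟨g, hg.1⟩).symm.toAlgEquiv.toAlgHom.comp
      (relCommutant B).toSubalgebra.val).codRestrict _ fun x ↦ by
        have h := conj_mem_relCommutant (star_mem_normalizer hg) x.2
        rwa [star_star] at h)
    (AlgHom.ext fun x ↦ Subtype.ext <|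
      (Unitary.conjStarAlgAut ℂ A ⟨g, hg.1⟩).apply_symm_apply (x : A))
    (AlgHom.ext fun x ↦ Subtype.ext <|
      (Unitary.conjStarAlgAut ℂ A ⟨g, hg.1⟩).symm_apply_apply (x : A))

@[simp]
theorem coe_conjRelCommutant (hg : g ∈ normalizer (B : Set A)) (x : relCommutant B) :
    (conjRelCommutant hg x : A) = g * x * star g :=
  rfl

section UBC

theorem one_mem_UBC : (1 : A) ∈ UBC (B : Set A) :=
  ⟨1, 1, one_mem B, one_mem _, fun b _ ↦ by simp, one_mem _, by simp⟩

theorem star_mem_UBC (hx : x ∈ UBC (B : Set A)) : star x ∈ UBC (B : Set A) := by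
  obtain ⟨b, c, hb, hbu, hc, hcu, rfl⟩ := hx
  rw [← mem_relCommutant_iff] at hc
  refine ⟨star b, star c, star_mem hb, Unitary.star_mem hbu,
    mem_relCommutant_iff.mp (star_mem hc), Unitary.star_mem hcu, ?_⟩
  rw [star_mul, mem_relCommutant_iff.mp (star_mem hc) _ (star_mem (s := B) hb)]

theorem mul_mem_UBC (hx : x ∈ UBC (B : Set A)) (hy : y ∈ UBC (B : Set A)) :
    x * y ∈ UBC (B : Set A) := by
  obtain ⟨b, c, hb, hbu, hc, hcu, rfl⟩ := hx
  obtain ⟨b', c', hb', hbu', hc', hcu', rfl⟩ := hy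
  have hcc := mul_mem (mem_relCommutant_iff.mpr hc) (mem_relCommutant_iff.mpr hc')
  refine ⟨b * b', c * c', mul_mem hb hb', mul_mem hbu hbu', mem_relCommutant_iff.mp hcc,
    mul_mem hcu hcu', ?_⟩
  rw [mul_assoc, ← mul_assoc c, hc b' hb', mul_assoc, mul_assoc]

theorem UBC_eq_UB (hirr : ∀ z ∈ cent (B : Set A), ∃ c : ℂ, z = c • (1 : A)) :
    UBC (B : Set A) = UB (B : Set A) := by
  refine Set.Subset.antisymm ?_ fun b hb ↦
    ⟨b, 1, hb.1, hb.2, fun b _ ↦ by simp, one_mem _, by simp⟩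
  rintro _ ⟨b, c, hb, hbu, hc, hcu, rfl⟩
  obtain ⟨s, rfl⟩ := hirr c hc
  exact ⟨mul_mem hb (B.smul_mem (one_mem B) s), mul_mem hbu hcu⟩

end UBC

/-- A family of representatives, one for each left coset, of the generalized Weyl group
`W(B ⊂ A) = N_A(B) / U(B) U(C_A(B))`. -/
structure IsWeylTransversal (B : Set A) {n : ℕ} (u : Fin n → A) : Prop where
  mem_normalizer : ∀ i, u i ∈ normalizer B
  star_mul_notMem : ∀ i j, i ≠ j → star (u i) * u j ∉ UBC B
  exists_star_mul_mem : ∀ v ∈ normalizer B, ∃ i, star (u i) * v ∈ UBC B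

variable (B) in
/-- Normalizing unitaries are equivalent if they define the same element of `W(B ⊂ A)`. -/
def weylSetoid : Setoid (normalizer (B : Set A)) where
  r g h := star g.1 * h.1 ∈ UBC (B : Set A)
  iseqv :=
    { refl g := by simpa [Unitary.star_mul_self_of_mem g.2.1] using one_mem_UBC
      symm h := by simpa using star_mem_UBC h
      trans {f g h} hfg hgh := by
        have := mul_mem_UBC hfg hgh
        rwa [mul_assoc, ← mul_assoc g.1, Unitary.mul_star_self_of_mem g.2.1, one_mul] at this }

theorem exists_isWeylTransversal {N : ℕ}
    (hN : ∀ (n : ℕ) (u : Fin n → A), (∀ i, u i ∈ normalizer (B : Set A)) →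
      (∀ i j, i ≠ j → star (u i) * u j ∉ UBC (B : Set A)) → n ≤ N) :
    ∃ (n : ℕ) (u : Fin n → A), IsWeylTransversal (B : Set A) u := by
  obtain ⟨n, u, hne, hex⟩ := exists_fin_transversal (weylSetoid B) fun n u hu ↦
    hN n (fun i ↦ u i) (fun i ↦ (u i).2) fun i j hij ↦ hu hij
  exact ⟨n, fun i ↦ u i, fun i ↦ (u i).2, fun i j hij ↦ hne hij, fun v hv ↦ hex ⟨v, hv⟩⟩

theorem IsRegular.continuousLinearMap_ext {V : Type*} [AddCommMonoid V] [Module ℂ V]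
    [TopologicalSpace V] [T2Space V] (hreg : IsRegular (B : Set A)) {f f' : A →L[ℂ] V}
    (h : Set.EqOn f f' (normalizer (B : Set A))) : f = f' := by
  let N : Submonoid A :=
    { carrier := normalizer (B : Set A)
      one_mem' := one_mem_normalizer
      mul_mem' := mul_mem_normalizer }
  have adjoin_eq :
      Subalgebra.toSubmodule (StarAlgebra.adjoin ℂ (normalizer (B : Set A))).toSubalgebra =
        Submodule.span ℂ (normalizer (B : Set A)) := by
    have hstar : star (normalizer (B : Set A)) ⊆ normalizer (B : Set A) := fun g hg ↦ by
      simpa using star_mem_normalizer hg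
    rw [StarAlgebra.adjoin_eq_span, Set.union_eq_self_of_subset_right hstar]
    exact congrArg (fun M : Submonoid A ↦ Submodule.span ℂ (M : Set A)) N.closure_eq
  have hdense : Dense (StarAlgebra.adjoin ℂ (normalizer (B : Set A)) : Set A) := by
    intro x
    rw [← StarSubalgebra.topologicalClosure_coe, hreg]
    trivial
  refine ContinuousLinearMap.ext fun x ↦
    congrFun (Continuous.ext_on hdense f.continuous f'.continuous fun x hx ↦ ?_) x
  exact LinearMap.eqOn_span (f := f.toLinearMap) (g := f'.toLinearMap) h (adjoin_eq.le hx)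

section Simple

theorem IsSimpleCStar.eq_zero_or_isUnit (hB : IsClosed (B : Set A))
    (hsimple : IsSimpleCStar (B : Set A)) (hy : y ∈ B) (hyc : y ∈ cent (B : Set A)) :
    y = 0 ∨ IsUnit y := by
  let I := (B.toSubalgebra.toSubmodule.map (LinearMap.mulLeft ℂ y)).topologicalClosure
  have coe_I : (I : Set A) = closure ((y * ·) '' (B : Set A)) := rfl
  have hsub : (I : Set A) ⊆ B := by
    refine closure_minimal ?_ hB
    rintro _ ⟨b, hb, rfl⟩
    exact mul_mem hy hb
  have hideal : ∀ x ∈ (I : Set A), ∀ b ∈ (B : Set A),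
      x * b ∈ (I : Set A) ∧ b * x ∈ (I : Set A) := by
    intro x hx b hb
    rw [coe_I] at hx ⊢
    constructor
    · refine map_mem_closure (f := (· * b)) (continuous_mul_const b) hx ?_
      rintro _ ⟨a, ha, rfl⟩
      exact ⟨a * b, mul_mem (s := B) ha hb, (mul_assoc _ _ _).symm⟩
    · refine map_mem_closure (f := (b * ·)) (continuous_const_mul b) hx ?_
      rintro _ ⟨a, ha, rfl⟩
      exact ⟨b * a, mul_mem (s := B) hb ha, by simp only [← mul_assoc, hyc b hb]⟩
  rcases hsimple I hsub isClosed_closure I.zero_mem (fun _ hx _ ↦ I.add_mem hx) hideal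
    with hI | hI
  · left
    have : y ∈ (I : Set A) := subset_closure ⟨1, one_mem B, mul_one y⟩
    rwa [hI] at this
  · right
    have one_mem_closure : (1 : A) ∈ closure ((y * ·) '' (B : Set A)) := by
      rw [← coe_I, hI]
      exact one_mem B
    obtain ⟨_, ⟨b, hb, rfl⟩, hlt⟩ := Metric.mem_closure_iff.mp one_mem_closure 1 one_pos
    have hyb : IsUnit (y * b) := by
      rw [← sub_sub_cancel 1 (y * b)]
      exact isUnit_one_sub_of_norm_lt_one (dist_eq_norm (1 : A) (y * b) ▸ hlt)
    exact ((show Commute y b from hyc b hb).isUnit_mul_iff.mp hyb).1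

theorem IsSimpleCStar.hasTrivialCenter (hB : IsClosed (B : Set A))
    (hsimple : IsSimpleCStar (B : Set A)) : HasTrivialCenter (B : Set A) := by
  intro z hz hzc
  rcases subsingleton_or_nontrivial A with _ | _
  · exact ⟨0, Subsingleton.elim _ _⟩
  obtain ⟨c, hc⟩ := spectrum.nonempty z
  refine ⟨c, ?_⟩
  rw [← Algebra.algebraMap_eq_smul_one, ← sub_eq_zero, ← neg_sub, neg_eq_zero]
  refine (hsimple.eq_zero_or_isUnit hB (sub_mem (algebraMap_mem B c) hz) ?_).resolve_right hc
  rw [← mem_relCommutant_iff]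
  exact sub_mem (algebraMap_mem _ c) (mem_relCommutant_iff.mpr hzc)

end Simple
end Inclusion

section CondExp

attribute [local instance] CStarAlgebra.spectralOrder CStarAlgebra.spectralOrderedRing

variable {A : Type*} [CStarAlgebra A] {B : StarSubalgebra ℂ A} {F : A →ₗ[ℂ] A} {a b g x y : A}

theorem nonneg_of_smul_one_nonneg [Nontrivial A] {c : ℂ} (h : 0 ≤ c • (1 : A)) : 0 ≤ c :=
  spectrum_nonneg_of_nonneg h (by simp [← Algebra.algebraMap_eq_smul_one])

theorem eq_norm_smul_one_of_nonneg (ha : 0 ≤ a) {c : ℂ} (h : a = c • (1 : A)) :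
    a = (‖a‖ : ℂ) • (1 : A) := by
  nontriviality A
  have hc : 0 ≤ c := nonneg_of_smul_one_nonneg (h ▸ ha)
  rw [h, norm_smul, norm_one, mul_one, ← Complex.eq_coe_norm_of_nonneg hc]

theorem inv_norm_smul_mem_unitary (hy : y ≠ 0) {s s' : ℂ} (hs : star y * y = s • (1 : A))
    (hs' : y * star y = s' • (1 : A)) : (‖y‖ : ℂ)⁻¹ • y ∈ unitary A := by
  have star_mul_self := eq_norm_smul_one_of_nonneg (star_mul_self_nonneg y) hs
  have mul_star_self := eq_norm_smul_one_of_nonneg (mul_star_self_nonneg y) hs'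
  rw [CStarRing.norm_star_mul_self] at star_mul_self
  rw [CStarRing.norm_self_mul_star] at mul_star_self
  have norm_ne : (‖y‖ : ℂ) ≠ 0 := by simpa using hy
  have norm_cancel : (‖y‖ : ℂ)⁻¹ * (‖y‖ : ℂ)⁻¹ * (‖y‖ * ‖y‖ : ℝ) = 1 := by
    push_cast
    field_simp
  have star_smul : star ((‖y‖ : ℂ)⁻¹ • y) = (‖y‖ : ℂ)⁻¹ • star y := by simp
  rw [Unitary.mem_iff, star_smul]
  simp only [smul_mul_smul_comm, star_mul_self, mul_star_self, smul_smul, norm_cancel,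
    one_smul, and_self]

theorem mem_UBC_of_intertwiner (hB : HasTrivialCenter (B : Set A))
    (hg : g ∈ normalizer (B : Set A)) (hy : y ∈ B) (hy₀ : y ≠ 0)
    (hyg : ∀ b ∈ B, y * b = g * b * star g * y) : g ∈ UBC (B : Set A) := by
  obtain ⟨hgu, -, hconj'⟩ := mem_normalizer_iff.mp hg
  have star_mul_conj (b) (hb : b ∈ B) : star y * (g * b * star g) = b * star y := by
    simpa [mul_assoc] using (congrArg star (hyg (star b) (star_mem hb))).symm
  have eq_conj (b : A) : g * (star g * b * g) * star g = b := by
    simp [← mul_assoc, mul_assoc b, Unitary.mul_star_self_of_mem hgu]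
  -- `star y * y` and `y * star y` are central in `B`, hence scalar: `y` is a multiple of a unitary
  -- `w` of `B`, and `star w * g` commutes with `B`.
  obtain ⟨s, hs⟩ := hB (star y * y) (mul_mem (star_mem hy) hy) fun b hb ↦ by
    rw [mul_assoc, hyg b hb, ← mul_assoc, star_mul_conj b hb, mul_assoc]
  obtain ⟨s', hs'⟩ := hB (y * star y) (mul_mem hy (star_mem hy)) fun b hb ↦ by
    have h := star_mul_conj _ (hconj' b hb)
    have h' := hyg _ (hconj' b hb)
    rw [eq_conj] at h h'
    rw [mul_assoc, h, ← mul_assoc, h', mul_assoc]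
  have hwu := inv_norm_smul_mem_unitary hy₀ hs hs'
  set w := (‖y‖ : ℂ)⁻¹ • y with hw
  refine ⟨w, star w * g, B.smul_mem hy _, hwu, fun b hb ↦ ?_,
    mul_mem (Unitary.star_mem hwu) hgu, ?_⟩
  · have h : star y * g * b = b * (star y * g) := by
      rw [← mul_assoc, ← star_mul_conj b hb]
      simp [mul_assoc, Unitary.star_mul_self_of_mem hgu]
    rw [hw, star_smul, smul_mul_assoc, smul_mul_assoc, mul_smul_comm, h]
  · rw [← mul_assoc, Unitary.mul_star_self_of_mem hwu, one_mul]

namespace IsCondExp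

theorem map_mul_left (hF : IsCondExp (B : Set A) F) (hb : b ∈ B) (x : A) :
    F (b * x) = b * F x := by
  simpa using hF.2.2.2 b hb 1 (one_mem B) x

theorem map_mul_right (hF : IsCondExp (B : Set A) F) (hb : b ∈ B) (x : A) :
    F (x * b) = F x * b := by
  simpa using hF.2.2.2 1 (one_mem B) b hb x

theorem map_one (hF : IsCondExp (B : Set A) F) : F 1 = 1 :=
  hF.2.1 1 (one_mem B)

/-- A conditional expectation, bundled as a positive linear map for the spectral order. -/
noncomputable def toPositiveLinearMap (hF : IsCondExp (B : Set A) F) : A →ₚ[ℂ] A :=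
  .mk₀ F fun x hx ↦ by
    obtain ⟨y, rfl⟩ := CStarAlgebra.nonneg_iff_eq_star_mul_self.mp hx
    obtain ⟨z, hz⟩ := hF.2.2.1 y
    exact hz ▸ star_mul_self_nonneg z

theorem map_nonneg (hF : IsCondExp (B : Set A) F) (hx : 0 ≤ x) : 0 ≤ F x :=
  _root_.map_nonneg hF.toPositiveLinearMap hx

theorem map_le_map (hF : IsCondExp (B : Set A) F) (hxy : x ≤ y) : F x ≤ F y :=
  OrderHomClass.mono hF.toPositiveLinearMap hxy

theorem map_star (hF : IsCondExp (B : Set A) F) (x : A) : F (star x) = star (F x) :=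
  StarHomClass.map_star hF.toPositiveLinearMap x

theorem continuous (hF : IsCondExp (B : Set A) F) : Continuous F :=
  map_continuous hF.toPositiveLinearMap

theorem norm_map_le (hF : IsCondExp (B : Set A) F) (hx : 0 ≤ x) : ‖F x‖ ≤ ‖x‖ := by
  refine (CStarAlgebra.norm_le_iff_le_algebraMap (F x) (norm_nonneg x) (hF.map_nonneg hx)).mpr ?_
  have h := hF.map_le_map (IsSelfAdjoint.of_nonneg hx).le_algebraMap_norm_self
  rwa [Algebra.algebraMap_eq_smul_one, LinearMap.map_smul_of_tower, hF.map_one,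
    ← Algebra.algebraMap_eq_smul_one] at h

theorem map_mul_star_mul_star_le (hF : IsCondExp (B : Set A) F) {k : ℝ} (hk : 0 < k)
    (hy : F (y * star y) ≤ k • (1 : A)) :
    F (x * star y) * star (F (x * star y)) ≤ k • F (x * star x) := by
  set b := F (x * star y) with hb
  have hbB : b ∈ B := hF.1 _
  have map_swap : F (y * star x) = star b := by rw [hb, ← hF.map_star, star_mul, star_star]
  have conj_le : b * F (y * star y) * star b ≤ k • (b * star b) := by
    simpa using star_right_conjugate_le_conjugate hy b
  -- Cauchy-Schwarz: `F` is nonnegative at `(k • x - b * y) * star (k • x - b * y)`.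
  have expand : (k • x - b * y) * star (k • x - b * y) =
      k • k • (x * star x) - k • (x * star y * star b) - k • (b * (y * star x)) +
        b * (y * star y) * star b := by
    simp only [star_sub, star_smul, star_mul, star_trivial, sub_mul, mul_sub, smul_mul_assoc,
      mul_smul_comm, smul_sub, mul_assoc]
    abel
  have h := hF.map_nonneg (mul_star_self_nonneg (k • x - b * y))
  rw [expand, map_add, map_sub, map_sub] at h
  simp only [LinearMap.map_smul_of_tower, hF.map_mul_right (star_mem hbB), hF.map_mul_left hbB,
    map_swap, ← hb] at h
  refine le_of_smul_le_smul_left (sub_nonneg.mp ?_) hk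
  calc 0 ≤ _ := add_nonneg h (sub_nonneg.mpr conj_le)
    _ = _ := by abel

theorem sq_norm_map_mul_star_le (hF : IsCondExp (B : Set A) F) (x y : A) :
    ‖F (x * star y)‖ ^ 2 ≤ ‖F (x * star x)‖ * ‖F (y * star y)‖ := by
  refine le_mul_of_forall_lt₀ fun s hs k hk ↦ ?_
  have hk₀ : 0 < k := (norm_nonneg _).trans_lt hk
  have hy : F (y * star y) ≤ k • (1 : A) := by
    rw [← Algebra.algebraMap_eq_smul_one,
      ← CStarAlgebra.norm_le_iff_le_algebraMap _ hk₀.le (hF.map_nonneg (mul_star_self_nonneg y))]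
    exact hk.le
  calc ‖F (x * star y)‖ ^ 2 = ‖F (x * star y) * star (F (x * star y))‖ := by
        rw [CStarRing.norm_self_mul_star, sq]
    _ ≤ ‖k • F (x * star x)‖ := CStarAlgebra.norm_le_norm_of_nonneg_of_le
        (mul_star_self_nonneg _) (hF.map_mul_star_mul_star_le hk₀ hy)
    _ = k * ‖F (x * star x)‖ := by rw [norm_smul, Real.norm_of_nonneg hk₀.le]
    _ ≤ s * k := by rw [mul_comm]; gcongr

end IsCondExp

section FourierSum

/-- The Fourier partial sum `∑ⱼ F(a xⱼ) xⱼ*` of `a` with respect to a finite family `x`. -/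
noncomputable def fourierSum (F : A →ₗ[ℂ] A) {ι : Type*} [Fintype ι] (x : ι → A) : A →ₗ[ℂ] A :=
  ∑ j, LinearMap.mulRight ℂ (star (x j)) ∘ₗ F ∘ₗ LinearMap.mulRight ℂ (x j)

variable {ι : Type*} [Fintype ι] {z : ι → A}

theorem fourierSum_apply (z : ι → A) (a : A) :
    fourierSum F z a = ∑ j, F (a * z j) * star (z j) := by
  simp [fourierSum]

theorem isRightQB_iff_fourierSum_eq {n : ℕ} {l : Fin n → A} :
    IsRightQB F l ↔ ∀ a, fourierSum F l a = a := by
  simp only [IsRightQB, fourierSum_apply, eq_comm]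

theorem IsCondExp.map_mul_star_fourierSum (hF : IsCondExp (B : Set A) F) (z : ι → A) (y a : A) :
    F (y * star (fourierSum F z a)) = ∑ j, F (y * z j) * star (F (a * z j)) := by
  simp only [fourierSum_apply, star_sum, star_mul, star_star, Finset.mul_sum, map_sum,
    ← mul_assoc, hF.map_mul_right (star_mem (hF.1 _))]

variable [DecidableEq ι]

theorem IsOrthonormal.map_fourierSum_mul (hF : IsCondExp (B : Set A) F) (hz : IsOrthonormal F z)
    (a : A) (k : ι) : F (fourierSum F z a * z k) = F (a * z k) := by
  simp [fourierSum_apply, Finset.sum_mul, map_sum, mul_assoc, hF.map_mul_left (hF.1 _), hz _ k]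

theorem IsOrthonormal.map_fourierSum_mul_star_le (hF : IsCondExp (B : Set A) F)
    (hz : IsOrthonormal F z) (a : A) :
    F (fourierSum F z a * star (fourierSum F z a)) ≤ F (a * star a) := by
  set p := fourierSum F z a
  have right_orth : F ((a - p) * star p) = 0 := by
    rw [sub_mul, map_sub, hF.map_mul_star_fourierSum, hF.map_mul_star_fourierSum]
    simp only [p, hz.map_fourierSum_mul hF, sub_self]
  have left_orth : F (p * star (a - p)) = 0 := by
    rw [← star_star p, ← star_mul, star_star, hF.map_star, right_orth, star_zero]
  have pythagoras : F (a * star a) = F (p * star p) + F ((a - p) * star (a - p)) := by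
    calc F (a * star a) = F ((p + (a - p)) * (star p + star (a - p))) := by
          rw [← star_add, add_sub_cancel]
      _ = _ := by simp only [add_mul, mul_add, map_add, right_orth, left_orth, zero_add, add_zero]
  rw [pythagoras]
  exact le_add_of_nonneg_right (hF.map_nonneg (mul_star_self_nonneg _))

end FourierSum

section FiniteIndex

variable {m : ℕ} {l : Fin m → A}

theorem IsRightQB.exists_sq_norm_le (hF : IsCondExp (B : Set A) F) (hl : IsRightQB F l) :
    ∃ K : ℝ, 0 ≤ K ∧ ∀ x, ‖x‖ ^ 2 ≤ K * ‖F (x * star x)‖ := by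
  refine ⟨(∑ i, ‖F (star (l i) * l i)‖) * ∑ i, ‖l i‖ ^ 2, by positivity, fun x ↦ ?_⟩
  have sq_norm_coeff_le (i) : ‖F (x * l i)‖ ^ 2 ≤ ‖F (x * star x)‖ * ‖F (star (l i) * l i)‖ := by
    simpa using hF.sq_norm_map_mul_star_le x (star (l i))
  calc ‖x‖ ^ 2 = ‖∑ i, F (x * l i) * star (l i)‖ ^ 2 := by rw [← hl x]
    _ ≤ (∑ i, ‖F (x * l i)‖ * ‖l i‖) ^ 2 := by
        gcongr
        exact norm_sum_le_of_le _ fun i _ ↦ (norm_mul_le _ _).trans_eq (by rw [norm_star])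
    _ ≤ (∑ i, ‖F (x * l i)‖ ^ 2) * ∑ i, ‖l i‖ ^ 2 := Finset.sum_mul_sq_le_sq_mul_sq _ _ _
    _ ≤ (∑ i, ‖F (x * star x)‖ * ‖F (star (l i) * l i)‖) * ∑ i, ‖l i‖ ^ 2 := by
        gcongr with i
        exact sq_norm_coeff_le i
    _ = _ := by rw [← Finset.mul_sum]; ring

theorem IsRightQB.eq_zero_of_map_mul_star_eq_zero (hF : IsCondExp (B : Set A) F)
    (hl : IsRightQB F l) (hx : F (x * star x) = 0) : x = 0 := by
  obtain ⟨K, -, hK⟩ := hl.exists_sq_norm_le hF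
  simpa [hx] using hK x

theorem IsRightQB.sum_mul_star_eq (hF : IsCondExp (B : Set A) F) (hl : IsRightQB F l)
    {ι : Type*} [Fintype ι] (z : ι → A) :
    ∑ j, z j * star (z j) = ∑ i, star (fourierSum F z (star (l i))) * star (l i) := by
  calc ∑ j, z j * star (z j) = ∑ j, z j * ∑ i, F (star (z j) * l i) * star (l i) := by
        simp only [← hl _]
    _ = ∑ i, (∑ j, z j * F (star (z j) * l i)) * star (l i) := by
        simp only [Finset.mul_sum, Finset.sum_mul, mul_assoc]
        exact Finset.sum_comm
    _ = _ := by simp only [fourierSum_apply, star_sum, star_mul, star_star, ← hF.map_star]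

theorem IsRightQB.sum_mul_star_eq_sum_mul_star (hF : IsCondExp (B : Set A) F)
    (hl : IsRightQB F l) {n : ℕ} {l' : Fin n → A} (hl' : IsRightQB F l') :
    ∑ i, l' i * star (l' i) = ∑ i, l i * star (l i) := by
  rw [hl.sum_mul_star_eq hF l']
  simp only [isRightQB_iff_fourierSum_eq.mp hl' _, star_star]

theorem IsRightQB.exists_norm_sum_mul_star_le (hF : IsCondExp (B : Set A) F)
    (hl : IsRightQB F l) : ∃ K : ℝ, ∀ (n : ℕ) (z : Fin n → A), IsOrthonormal F z →
      ‖∑ j, z j * star (z j)‖ ≤ K := by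
  obtain ⟨K, hK₀, hK⟩ := hl.exists_sq_norm_le hF
  refine ⟨∑ i, √(K * ‖F (star (l i) * l i)‖) * ‖l i‖, fun n z hz ↦ ?_⟩
  have norm_fourierSum_le (a) : ‖fourierSum F z a‖ ≤ √(K * ‖F (a * star a)‖) := by
    refine Real.le_sqrt_of_sq_le ((hK _).trans ?_)
    gcongr
    exact CStarAlgebra.norm_le_norm_of_nonneg_of_le (hF.map_nonneg (mul_star_self_nonneg _))
      (hz.map_fourierSum_mul_star_le hF a)
  rw [hl.sum_mul_star_eq hF]
  refine norm_sum_le_of_le _ fun i _ ↦ (norm_mul_le _ _).trans ?_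
  rw [norm_star, norm_star]
  gcongr
  simpa using norm_fourierSum_le (star (l i))

end FiniteIndex

end CondExp

section Finiteness

attribute [local instance] CStarAlgebra.spectralOrder CStarAlgebra.spectralOrderedRing

variable {A : Type*} [CStarAlgebra A] {B : StarSubalgebra ℂ A} {F : A →ₗ[ℂ] A} {c c' g : A}

namespace IsCondExp

theorem map_mul_mul_eq_zero (hB : HasTrivialCenter (B : Set A)) (hF : IsCondExp (B : Set A) F)
    (hg : g ∈ normalizer (B : Set A)) (hgU : g ∉ UBC (B : Set A)) (hc : c ∈ relCommutant B)
    (hc' : c' ∈ relCommutant B) : F (c * g * c') = 0 := by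
  by_contra hne
  refine hgU (mem_UBC_of_intertwiner hB hg (hF.1 _) hne fun b hb ↦ ?_)
  obtain ⟨hgu, hconj, -⟩ := mem_normalizer_iff.mp hg
  rw [← hF.map_mul_right hb, ← hF.map_mul_left (hconj b hb)]
  congr 1
  rw [mem_relCommutant_iff] at hc hc'
  calc c * g * c' * b = c * g * b * c' := by rw [mul_assoc _ c', hc' b hb, ← mul_assoc]
    _ = c * (g * b * star g) * g * c' := by
        rw [mul_assoc c (_ * star g), mul_assoc _ (star g), Unitary.star_mul_self_of_mem hgu,
          mul_one, ← mul_assoc c]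
    _ = g * b * star g * (c * g * c') := by rw [hc _ (hconj b hb)]; simp only [mul_assoc]

theorem exists_map_eq_smul_one (hB : HasTrivialCenter (B : Set A))
    (hF : IsCondExp (B : Set A) F) :
    ∃ φ : relCommutant B →ₗ[ℂ] ℂ, ∀ x : relCommutant B, F x = φ x • (1 : A) := by
  nontriviality A
  obtain ⟨ω, hω⟩ := SeparatingDual.exists_eq_one (R := ℂ) (one_ne_zero (α := A))
  refine ⟨ω.toLinearMap ∘ₗ F ∘ₗ (relCommutant B).toSubalgebra.val.toLinearMap, fun x ↦ ?_⟩
  obtain ⟨s, hs⟩ := hB (F x) (hF.1 x) fun b hb ↦ by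
    rw [← hF.map_mul_left hb, ← hF.map_mul_right hb, mem_relCommutant_iff.mp x.2 b hb]
  simp [hs, hω]

end IsCondExp

variable {φ : relCommutant B →ₗ[ℂ] ℂ} {m : ℕ} {l : Fin m → A}

theorem IsOrthonormal.coe_relCommutant (hφ : ∀ x : relCommutant B, F x = φ x • (1 : A))
    {ι : Type*} [DecidableEq ι] {c : ι → relCommutant B} (hc : IsOrthonormal φ c) :
    IsOrthonormal F (fun i ↦ (c i : A)) := fun i j ↦ by
  have h := hφ (star (c i) * c j)
  rw [hc i j] at h
  simpa using h

variable [Nontrivial A]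

theorem IsRightQB.isFaithfulState (hF : IsCondExp (B : Set A) F) (hl : IsRightQB F l)
    (hφ : ∀ x : relCommutant B, F x = φ x • (1 : A)) : IsFaithfulState φ where
  map_one := smul_left_injective ℂ (one_ne_zero (α := A)) (by simp [← hφ, hF.map_one])
  map_star x := smul_left_injective ℂ (one_ne_zero (α := A)) <| by
    have h : F (star (x : A)) = φ (star x) • (1 : A) := hφ (star x)
    simp [← h, hF.map_star, hφ x]
  nonneg x := nonneg_of_smul_one_nonneg (A := A) <| by
    rw [← hφ]
    exact hF.map_nonneg (star_mul_self_nonneg (x : A))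
  eq_zero x hx := by
    have h : F (star (x : A) * star (star (x : A))) = 0 := by simpa [hx] using hφ (star x * x)
    simpa using hl.eq_zero_of_map_mul_star_eq_zero hF h

theorem IsRightQB.finiteDimensional_relCommutant (hF : IsCondExp (B : Set A) F)
    (hl : IsRightQB F l) (hφ : ∀ x : relCommutant B, F x = φ x • (1 : A)) :
    FiniteDimensional ℂ (relCommutant B) := by
  have hφF := hl.isFaithfulState hF hφ
  obtain ⟨K, hK₀, hK⟩ := hl.exists_sq_norm_le hF
  obtain ⟨N, hN⟩ := hl.exists_norm_sum_mul_star_le hF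
  refine hφF.finiteDimensional (N := ⌊K * N⌋₊) fun n c hc ↦ Nat.le_floor ?_
  have norm_map_eq (x : relCommutant B) (hx : 0 ≤ (x : A)) : ‖F x‖ = (φ x).re := by
    have h : 0 ≤ φ x := nonneg_of_smul_one_nonneg (hφ x ▸ hF.map_nonneg hx)
    rw [hφ x, norm_smul, norm_one, mul_one, Complex.re_eq_norm.mpr h]
  have one_le (j) : 1 ≤ K * (φ (c j * star (c j))).re := by
    calc (1 : ℝ) = ‖F (star (c j : A) * c j)‖ := by simp [hc.coe_relCommutant hφ j j]
      _ ≤ ‖(c j : A)‖ ^ 2 := by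
          rw [sq, ← CStarRing.norm_star_mul_self]
          exact hF.norm_map_le (star_mul_self_nonneg _)
      _ ≤ K * (φ (c j * star (c j))).re :=
          norm_map_eq (c j * star (c j)) (mul_star_self_nonneg _) ▸ hK (c j)
  have sum_le : (φ (∑ j, c j * star (c j))).re ≤ N := by
    have sum_nonneg : 0 ≤ ((∑ j, c j * star (c j) : relCommutant B) : A) := by
      simpa using Finset.sum_nonneg fun j _ ↦ mul_star_self_nonneg (c j : A)
    rw [← norm_map_eq _ sum_nonneg]
    exact (hF.norm_map_le sum_nonneg).trans (by simpa using hN n _ (hc.coe_relCommutant hφ))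
  calc (n : ℝ) = ∑ _j : Fin n, (1 : ℝ) := by simp
    _ ≤ ∑ j, K * (φ (c j * star (c j))).re := Finset.sum_le_sum fun j _ ↦ one_le j
    _ = K * (φ (∑ j, c j * star (c j))).re := by rw [← Finset.mul_sum, map_sum, Complex.re_sum]
    _ ≤ K * N := by gcongr

theorem exists_isWeylTransversal_of_isRightQB (hB : HasTrivialCenter (B : Set A))
    (hF : IsCondExp (B : Set A) F) (hl : IsRightQB F l) :
    ∃ (n : ℕ) (u : Fin n → A), IsWeylTransversal (B : Set A) u := by
  obtain ⟨N, hN⟩ := hl.exists_norm_sum_mul_star_le hF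
  refine exists_isWeylTransversal (N := ⌊N⌋₊) fun n u hu hne ↦ Nat.le_floor ?_
  have orthonormal : IsOrthonormal F u := fun i j ↦ by
    split_ifs with hij
    · rw [hij, Unitary.star_mul_self_of_mem (hu j).1, hF.map_one]
    · simpa using hF.map_mul_mul_eq_zero hB
        (mul_mem_normalizer (star_mem_normalizer (hu i)) (hu j)) (hne i j hij) (one_mem _)
        (one_mem _)
  have sum_eq : ∑ j, u j * star (u j) = (n : ℂ) • (1 : A) := by
    simp [Unitary.mul_star_self_of_mem (hu _).1, ← Nat.cast_smul_eq_nsmul ℂ]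
  simpa [sum_eq, norm_smul] using hN n u orthonormal

end Finiteness

section Index

variable {A : Type*} [CStarAlgebra A] {B : StarSubalgebra ℂ A} {F : A →ₗ[ℂ] A} {b : A}
  {φ : relCommutant B →ₗ[ℂ] ℂ}

theorem IsOrthonormal.fourierSum_mul_star {ι : Type*} [Fintype ι] [DecidableEq ι] {z : ι → A}
    (hF : IsCondExp (B : Set A) F) (hz : IsOrthonormal F z) (hb : b ∈ B) (k : ι) :
    fourierSum F z (b * star (z k)) = b * star (z k) := by
  simp [fourierSum_apply, mul_assoc, hF.map_mul_left hb, hz k]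

theorem IsCondExp.continuous_fourierSum {ι : Type*} [Fintype ι] (hF : IsCondExp (B : Set A) F)
    (z : ι → A) : Continuous (fourierSum F z) := by
  have := hF.continuous
  simp only [funext (fourierSum_apply z)]
  fun_prop

section WeylProduct

variable {n d : ℕ} {u : Fin n → A}

/-- The products of Weyl group representatives `u` with elements `c` of the relative commutant,
as a single finite family. -/
def weylProduct (u : Fin n → A) (c : Fin d → relCommutant B) (p : Fin n × Fin d) : A :=
  u p.1 * c p.2

theorem sum_weylProduct_mul_star (u : Fin n → A) (c : Fin d → relCommutant B) :
    ∑ p, weylProduct u c p * star (weylProduct u c p) =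
      ∑ w, u w * (∑ j, c j * star (c j) : relCommutant B) * star (u w) := by
  simp [weylProduct, Fintype.sum_prod_type, Finset.mul_sum, Finset.sum_mul, mul_assoc]

theorem isOrthonormal_weylProduct {c : Fin d → relCommutant B} (hB : HasTrivialCenter (B : Set A))
    (hF : IsCondExp (B : Set A) F) (hφ : ∀ x : relCommutant B, F x = φ x • (1 : A))
    (hc : IsOrthonormal φ c) (hu : IsWeylTransversal (B : Set A) u) :
    IsOrthonormal F (weylProduct u c) := by
  rintro ⟨w, j⟩ ⟨v, k⟩
  have assoc : star (weylProduct u c (w, j)) * weylProduct u c (v, k) =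
      star (c j : A) * (star (u w) * u v) * c k := by
    simp only [weylProduct, star_mul, mul_assoc]
  rw [assoc]
  by_cases hwv : w = v
  · simpa [hwv, Unitary.star_mul_self_of_mem (hu.mem_normalizer v).1] using
      hc.coe_relCommutant hφ j k
  · simpa [hwv] using hF.map_mul_mul_eq_zero hB
      (mul_mem_normalizer (star_mem_normalizer (hu.mem_normalizer w)) (hu.mem_normalizer v))
      (hu.star_mul_notMem w v hwv) (star_mem (c j).2) (c k).2

variable {c : Basis (Fin d) ℂ (relCommutant B)}

theorem IsWeylTransversal.exists_eq_sum (hu : IsWeylTransversal (B : Set A) u)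
    (c : Basis (Fin d) ℂ (relCommutant B)) {v : A} (hv : v ∈ normalizer (B : Set A)) :
    ∃ (w : Fin n) (b : Fin d → A), (∀ j, b j ∈ B) ∧
      v = ∑ j, b j * star (weylProduct u c (w, j)) := by
  obtain ⟨w, b, z, hb, -, hz, -, hbz⟩ := hu.exists_star_mul_mem _ (star_mem_normalizer hv)
  have star_v : star v = u w * z * b := by
    rw [mul_assoc, hz b hb, ← hbz, ← mul_assoc,
      Unitary.mul_star_self_of_mem (hu.mem_normalizer w).1, one_mul]
  obtain ⟨a, ha⟩ : ∃ a : Fin d → ℂ, z = ∑ j, a j • (c j : A) :=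
    ⟨c.repr ⟨z, mem_relCommutant_iff.mpr hz⟩, by
      have h := congrArg (relCommutant B).toSubalgebra.val
        (c.sum_repr ⟨z, mem_relCommutant_iff.mpr hz⟩)
      simp only [map_sum, map_smul] at h
      exact h.symm⟩
  refine ⟨w, fun j ↦ conj (a j) • star b, fun j ↦ B.smul_mem (star_mem hb) _, ?_⟩
  rw [← star_star v, star_v, ha]
  simp [weylProduct, Finset.mul_sum]

theorem isRightQB_weylProduct (hB : HasTrivialCenter (B : Set A)) (hreg : IsRegular (B : Set A))
    (hF : IsCondExp (B : Set A) F) (hφ : ∀ x : relCommutant B, F x = φ x • (1 : A))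
    (hc : IsOrthonormal φ c) (hu : IsWeylTransversal (B : Set A) u) :
    IsRightQB F (weylProduct u c ∘ finProdFinEquiv.symm) := by
  have hz := isOrthonormal_weylProduct hB hF hφ hc hu
  let S : A →L[ℂ] A := ⟨fourierSum F (weylProduct u c), hF.continuous_fourierSum _⟩
  have S_eq_id : S = .id ℂ A := hreg.continuousLinearMap_ext fun v hv ↦ by
    obtain ⟨w, b, hb, rfl⟩ := hu.exists_eq_sum c hv
    rw [map_sum]
    exact Finset.sum_congr rfl fun j _ ↦ hz.fourierSum_mul_star hF (hb j) (w, j)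
  intro x
  calc x = fourierSum F (weylProduct u c) x := (DFunLike.congr_fun S_eq_id x).symm
    _ = _ := by
        rw [fourierSum_apply, ← finProdFinEquiv.symm.sum_comp]
        rfl

theorem IsRightQB.sum_mul_star_eq_sum_conj (hB : HasTrivialCenter (B : Set A))
    (hreg : IsRegular (B : Set A)) (hF : IsCondExp (B : Set A) F)
    (hφ : ∀ x : relCommutant B, F x = φ x • (1 : A)) (hc : IsOrthonormal φ c)
    (hu : IsWeylTransversal (B : Set A) u) {m : ℕ} {l : Fin m → A} (hl : IsRightQB F l) :
    ∑ i, l i * star (l i) =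
      ∑ w, u w * (∑ j, c j * star (c j) : relCommutant B) * star (u w) := by
  rw [(isRightQB_weylProduct hB hreg hF hφ hc hu).sum_mul_star_eq_sum_mul_star hF hl,
    ← sum_weylProduct_mul_star]
  exact finProdFinEquiv.symm.sum_comp fun p ↦ weylProduct u c p * star (weylProduct u c p)

end WeylProduct

section Average

attribute [local instance] CStarAlgebra.spectralOrder CStarAlgebra.spectralOrderedRing

variable {ι : Type*} [Fintype ι]

/-- The average `x ↦ |ι|⁻¹ ∑ⱼ F(cⱼ* x cⱼ)` of a map over a finite family `c`. -/
noncomputable def average (F : A →ₗ[ℂ] A) (c : ι → A) : A →ₗ[ℂ] A :=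
  (Fintype.card ι : ℂ)⁻¹ • ∑ j, F ∘ₗ LinearMap.mulLeft ℂ (star (c j)) ∘ₗ LinearMap.mulRight ℂ (c j)

theorem average_apply (F : A →ₗ[ℂ] A) (c : ι → A) (x : A) :
    average F c x = (Fintype.card ι : ℂ)⁻¹ • ∑ j, F (star (c j) * x * c j) := by
  simp [average, mul_assoc]

theorem isCondExp_average [DecidableEq ι] [Nonempty ι] (hF : IsCondExp (B : Set A) F) {c : ι → A}
    (hcB : ∀ j, c j ∈ relCommutant B) (hc : IsOrthonormal F c) :
    IsCondExp (B : Set A) (average F c) := by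
  have hcB' (j) : star (c j) ∈ cent (B : Set A) := mem_relCommutant_iff.mp (star_mem (hcB j))
  simp only [mem_relCommutant_iff] at hcB
  have bimodule {b₁} (hb₁ : b₁ ∈ B) {b₂} (hb₂ : b₂ ∈ B) (x : A) :
      average F c (b₁ * x * b₂) = b₁ * average F c x * b₂ := by
    have comm (j) : star (c j) * (b₁ * x * b₂) * c j = b₁ * (star (c j) * x * c j) * b₂ := by
      rw [← mul_assoc, ← mul_assoc, hcB' j b₁ hb₁, mul_assoc _ b₂, ← hcB j b₂ hb₂]
      simp only [mul_assoc]
    simp only [average_apply, comm, hF.2.2.2 b₁ hb₁ b₂ hb₂, mul_smul_comm, smul_mul_assoc,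
      Finset.mul_sum, Finset.sum_mul]
  have average_one : average F c 1 = 1 := by
    simp [average_apply, hc _ _, ← Nat.cast_smul_eq_nsmul ℂ]
  refine ⟨fun x ↦ ?_, fun b hb ↦ ?_, fun x ↦ ?_, fun b₁ hb₁ b₂ hb₂ x ↦ bimodule hb₁ hb₂ x⟩
  · rw [average_apply]
    exact B.smul_mem (sum_mem fun j _ ↦ hF.1 _) _
  · simpa [average_one] using bimodule hb (one_mem B) 1
  · refine CStarAlgebra.nonneg_iff_eq_star_mul_self.mp ?_
    rw [average_apply]
    refine smul_nonneg (by simp) (Finset.sum_nonneg fun j _ ↦ hF.map_nonneg ?_)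
    simpa only [star_mul, mul_assoc] using star_mul_self_nonneg (x * c j)

end Average

end Index

section Minimal

variable {A : Type*} [CStarAlgebra A] {B : StarSubalgebra ℂ A} {F : A →ₗ[ℂ] A}
  {φ : relCommutant B →ₗ[ℂ] ℂ} {n m : ℕ} {u : Fin n → A} {l : Fin m → A}

theorem IsOrthonormal.average_eq_normalizedTrace_smul_one {ι : Type*} [Fintype ι] [DecidableEq ι]
    {c : Basis ι ℂ (relCommutant B)} (hφ : ∀ x : relCommutant B, F x = φ x • (1 : A))
    (hc : IsOrthonormal φ c) (x : relCommutant B) :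
    average F (fun j ↦ (c j : A)) x = normalizedTrace (relCommutant B) x • (1 : A) := by
  have map_conj (j) : F (star (c j : A) * x * c j) = φ (star (c j) * x * c j) • (1 : A) :=
    hφ (star (c j) * x * c j)
  simp only [average_apply, hc.normalizedTrace_eq, map_conj, ← Finset.sum_smul, smul_smul]

theorem IsWeylTransversal.pos (hu : IsWeylTransversal (B : Set A) u) : 0 < n :=
  let ⟨i, _⟩ := hu.exists_star_mul_mem 1 one_mem_normalizer
  i.pos

theorem IsWeylTransversal.sum_conj_eq (hu : IsWeylTransversal (B : Set A) u)
    (x : relCommutant B) :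
    ∑ w, u w * (x : A) * star (u w) =
      (∑ w, conjRelCommutant (hu.mem_normalizer w) x : relCommutant B) := by
  simp only [AddSubmonoidClass.coe_finsetSum, coe_conjRelCommutant]

theorem IsMinimalCondExp.nontrivial (hF : IsMinimalCondExp (B : Set A) F) : Nontrivial A := by
  obtain ⟨hF, r, n, l, hl, -, hmin⟩ := hF
  by_contra htriv
  rw [not_nontrivial_iff_subsingleton] at htriv
  exact (sub_one_lt r).not_ge (hmin F hF n l hl (r - 1) (Subsingleton.elim _ _))

theorem IsRightQB.exists_isCondExp_sum_mul_star_eq [Nontrivial A]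
    (hB : HasTrivialCenter (B : Set A)) (hreg : IsRegular (B : Set A))
    (hF : IsCondExp (B : Set A) F) (hl : IsRightQB F l) (hu : IsWeylTransversal (B : Set A) u) :
    ∃ T : A →ₗ[ℂ] A, IsCondExp (B : Set A) T ∧ ∃ (k : ℕ) (l' : Fin k → A), IsRightQB T l' ∧
      ∑ i, l' i * star (l' i) = ((n * finrank ℂ (relCommutant B) : ℕ) : ℂ) • (1 : A) := by
  obtain ⟨φ, hφ⟩ := hF.exists_map_eq_smul_one hB
  have hφF := hl.isFaithfulState hF hφ
  have := hl.finiteDimensional_relCommutant hF hφ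
  have : Nonempty (Fin (finrank ℂ (relCommutant B))) := ⟨⟨0, finrank_pos⟩⟩
  obtain ⟨c, hc⟩ := hφF.exists_orthonormal_basis
  have hτ := hφF.isFaithfulState_normalizedTrace
  obtain ⟨t, ht⟩ := hτ.exists_orthonormal_basis
  have hT := isCondExp_average hF (fun j ↦ (c j).2) (hc.coe_relCommutant hφ)
  have hTτ := hc.average_eq_normalizedTrace_smul_one hφ
  have hqb := isRightQB_weylProduct hB hreg hT hTτ ht hu
  refine ⟨_, hT, _, _, hqb, ?_⟩
  rw [hqb.sum_mul_star_eq_sum_conj hB hreg hT hTτ ht hu, ht.sum_mul_star_eq hτ]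
  simp [Unitary.mul_star_self_of_mem (hu.mem_normalizer _).1, ← Nat.cast_smul_eq_nsmul ℂ,
    smul_smul]

theorem IsRightQB.mul_finrank_le [Nontrivial A] (hB : HasTrivialCenter (B : Set A))
    (hreg : IsRegular (B : Set A)) (hF : IsCondExp (B : Set A) F) (hl : IsRightQB F l)
    (hu : IsWeylTransversal (B : Set A) u) {r : ℝ}
    (hr : ∑ i, l i * star (l i) = (r : ℂ) • (1 : A)) :
    ((n * finrank ℂ (relCommutant B) : ℕ) : ℝ) ≤ r := by
  obtain ⟨φ, hφ⟩ := hF.exists_map_eq_smul_one hB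
  have hφF := hl.isFaithfulState hF hφ
  have := hl.finiteDimensional_relCommutant hF hφ
  obtain ⟨c, hc⟩ := hφF.exists_orthonormal_basis
  have hτ := hφF.isFaithfulState_normalizedTrace
  set S := ∑ j, c j * star (c j)
  have sum_conj : ∑ w, conjRelCommutant (hu.mem_normalizer w) S = (r : ℂ) • 1 :=
    Subtype.ext <| by
      rw [← hu.sum_conj_eq, ← hl.sum_mul_star_eq_sum_conj hB hreg hF hφ hc hu, hr]
      rfl
  rw [← Complex.real_le_real, Complex.ofReal_natCast, Nat.cast_mul]
  calc (n : ℂ) * finrank ℂ (relCommutant B)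
      ≤ n * normalizedTrace (relCommutant B) S := by
        gcongr
        exact hφF.finrank_le_normalizedTrace_sum_mul_star hc
    _ = normalizedTrace (relCommutant B) (∑ w, conjRelCommutant (hu.mem_normalizer w) S) := by
        simp [normalizedTrace_algEquiv]
    _ = r := by rw [sum_conj, map_smul, hτ.map_one, smul_eq_mul, mul_one]

theorem IsMinimalCondExp.sum_mul_star_eq (hB : HasTrivialCenter (B : Set A))
    (hreg : IsRegular (B : Set A)) (hF : IsMinimalCondExp (B : Set A) F) (hl : IsRightQB F l)
    (hu : IsWeylTransversal (B : Set A) u) :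
    ∑ i, l i * star (l i) = ((n * finrank ℂ (relCommutant B) : ℕ) : ℂ) • (1 : A) := by
  have := hF.nontrivial
  obtain ⟨hF, r, k, l', hl', hr, hmin⟩ := hF
  obtain ⟨T, hT, p, q, hq, hsum⟩ := hl'.exists_isCondExp_sum_mul_star_eq hB hreg hF hu
  have r_eq : r = (n * finrank ℂ (relCommutant B) : ℕ) :=
    le_antisymm (hmin T hT p q hq _ (by rw [hsum, Complex.ofReal_natCast]))
      (hl'.mul_finrank_le hB hreg hF hu hr)
  rw [hl'.sum_mul_star_eq_sum_mul_star hF hl, hr, r_eq, Complex.ofReal_natCast]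

theorem IsMinimalCondExp.finrank_relCommutant_pos (hB : HasTrivialCenter (B : Set A))
    (hF : IsMinimalCondExp (B : Set A) F) : 0 < finrank ℂ (relCommutant B) := by
  have := hF.nontrivial
  obtain ⟨hF, _, _, l, hl, _⟩ := hF
  obtain ⟨φ, hφ⟩ := hF.exists_map_eq_smul_one hB
  have := hl.finiteDimensional_relCommutant hF hφ
  exact finrank_pos

theorem IsMinimalCondExp.exists_isWeylTransversal (hB : HasTrivialCenter (B : Set A))
    (hF : IsMinimalCondExp (B : Set A) F) :
    ∃ (n : ℕ) (u : Fin n → A), IsWeylTransversal (B : Set A) u := by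
  have := hF.nontrivial
  obtain ⟨hF, _, _, l, hl, _⟩ := hF
  exact exists_isWeylTransversal_of_isRightQB hB hF hl

theorem finrank_relCommutant_eq_one [Nontrivial A]
    (hirr : ∀ z ∈ cent (B : Set A), ∃ c : ℂ, z = c • (1 : A)) :
    finrank ℂ (relCommutant B) = 1 :=
  finrank_eq_one 1 one_ne_zero fun z ↦
    let ⟨c, hc⟩ := hirr z (mem_relCommutant_iff.mp z.2)
    ⟨c, Subtype.ext hc.symm⟩

end Minimal

theorem Watatani_index_of_regular_inclusion_general
    (B : StarSubalgebra ℂ A) (hB : HasTrivialCenter (B : Set A)) (hreg : IsRegular (B : Set A))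
    (E₀ : A →ₗ[ℂ] A) (hE₀ : IsMinimalCondExp (B : Set A) E₀) :
    ∃ (n : ℕ) (u : Fin n → A),
      (∀ i, u i ∈ normalizer (B : Set A)) ∧
      (∀ i j, i ≠ j → star (u i) * u j ∉ UBC (B : Set A)) ∧
      (∀ v ∈ normalizer (B : Set A), ∃ i, star (u i) * v ∈ UBC (B : Set A)) ∧
      (∀ (m : ℕ) (l : Fin m → A), IsRightQB E₀ l →
        (∑ i, l i * star (l i)) =
          (((n * Module.finrank ℂ ↥(centSubmodule (B : Set A)) : ℕ)) : ℂ) • (1 : A)) ∧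
      0 < n * Module.finrank ℂ ↥(centSubmodule (B : Set A)) ∧
      n ≤ n * Module.finrank ℂ ↥(centSubmodule (B : Set A)) ∧
      ((∀ z ∈ cent (B : Set A), ∃ c : ℂ, z = c • (1 : A)) →
        ∃ (m : ℕ) (v : Fin m → A),
          (∀ i, v i ∈ normalizer (B : Set A)) ∧
          (∀ i j, i ≠ j → star (v i) * v j ∉ UB (B : Set A)) ∧
          (∀ w ∈ normalizer (B : Set A), ∃ i, star (v i) * w ∈ UB (B : Set A)) ∧
          (∀ (k : ℕ) (l : Fin k → A), IsRightQB E₀ l →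
            (∑ i, l i * star (l i)) = ((m : ℕ) : ℂ) • (1 : A))) := by
  let _ : CStarAlgebra A := {}
  have := hE₀.nontrivial
  obtain ⟨n, u, hu⟩ := hE₀.exists_isWeylTransversal hB
  have finrank_pos := hE₀.finrank_relCommutant_pos hB
  have index_eq {m : ℕ} {l : Fin m → A} (hl : IsRightQB E₀ l) :=
    hE₀.sum_mul_star_eq hB hreg hl hu
  rw [← finrank_relCommutant]
  refine ⟨n, u, hu.mem_normalizer, hu.star_mul_notMem, hu.exists_star_mul_mem,
    fun m l hl ↦ index_eq hl, Nat.mul_pos hu.pos finrank_pos,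
    Nat.le_mul_of_pos_right n finrank_pos, fun hirr ↦ ?_⟩
  rw [← UBC_eq_UB hirr]
  refine ⟨n, u, hu.mem_normalizer, hu.star_mul_notMem, hu.exists_star_mul_mem, fun k l hl ↦ ?_⟩
  rw [index_eq hl, finrank_relCommutant_eq_one hirr, mul_one]

/-- for a regular inclusion `B ⊂ A` of simple unital C*-algebras with a
finite-index conditional expectation and minimal conditional expectation `E₀`, the
Watatani index satisfies `[A:B]₀ = |W(B ⊂ A)| · dim_ℂ C_A(B)`: for a complete finite set
of `n = |W(B ⊂ A)|` coset representatives of the generalized Weyl group, every right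
quasi-basis `(λ_i)` of `E₀` satisfies `Σ_i λ_i λ_i* = (n · dim_ℂ C_A(B))·1`.  In
particular `[A:B]₀` is a positive integer with `|W(B ⊂ A)| ≤ [A:B]₀`, and if the
inclusion is irreducible then `[A:B]₀ = |N_A(B)/U(B)|`. -/
theorem Watatani_index_of_regular_inclusion
    (B : StarSubalgebra ℂ A) (hBclosed : IsClosed (B : Set A))
    (hAsimple : IsSimpleCStar (Set.univ : Set A))
    (hBsimple : IsSimpleCStar (B : Set A))
    (hreg : IsRegular (B : Set A))
    (E : A →ₗ[ℂ] A) (hE : IsCondExp (B : Set A) E)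
    (nE : ℕ) (lE : Fin nE → A) (hlE : IsRightQB E lE)
    (E₀ : A →ₗ[ℂ] A) (hE₀ : IsMinimalCondExp (B : Set A) E₀) :
    ∃ (n : ℕ) (u : Fin n → A),
      (∀ i, u i ∈ normalizer (B : Set A)) ∧
      (∀ i j, i ≠ j → star (u i) * u j ∉ UBC (B : Set A)) ∧
      (∀ v ∈ normalizer (B : Set A), ∃ i, star (u i) * v ∈ UBC (B : Set A)) ∧
      (∀ (m : ℕ) (l : Fin m → A), IsRightQB E₀ l →
        (∑ i, l i * star (l i)) =
          (((n * Module.finrank ℂ ↥(centSubmodule (B : Set A)) : ℕ)) : ℂ) • (1 : A)) ∧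
      0 < n * Module.finrank ℂ ↥(centSubmodule (B : Set A)) ∧
      n ≤ n * Module.finrank ℂ ↥(centSubmodule (B : Set A)) ∧
      ((∀ z ∈ cent (B : Set A), ∃ c : ℂ, z = c • (1 : A)) →
        ∃ (m : ℕ) (v : Fin m → A),
          (∀ i, v i ∈ normalizer (B : Set A)) ∧
          (∀ i j, i ≠ j → star (v i) * v j ∉ UB (B : Set A)) ∧
          (∀ w ∈ normalizer (B : Set A), ∃ i, star (v i) * w ∈ UB (B : Set A)) ∧
          (∀ (k : ℕ) (l : Fin k → A), IsRightQB E₀ l →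
            (∑ i, l i * star (l i)) = ((m : ℕ) : ℂ) • (1 : A))) := by
  let _ : CStarAlgebra A := {}
  exact Watatani_index_of_regular_inclusion_general B (hBsimple.hasTrivialCenter hBclosed) hreg
    E₀ hE₀

end RegularInclusion
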